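/- arXiv:2510.21702 — 20 statements merged into one kernel-verified Lean document; each statement's English description precedes it below -/
import Mathlib

section
/- Let (a, b, c, d, e, f) be a primitive integral octahedral sextuple. Then a + f ≡ 2 (mod 4); in particular w = (a+f)/2 is an odd integer. -/
/-! The quadratic relation makes `a + f` even, say `a + f = 2 * w`, and then reads
`w ^ 2 - 2 * w * (a + b + c) + (a ^ 2 + b ^ 2 + c ^ 2) = 0`. If `w` were even, `4` would divide
`a ^ 2 + b ^ 2 + c ^ 2`; squares being `0` or `1` modulo `4`, all of `a, b, c` would be even, and by
the linear relations so would `d, e, f`, contradicting primitivity. -/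

theorem even_of_four_dvd_sum_three_sq {a b c : ℤ} (h : 4 ∣ a ^ 2 + b ^ 2 + c ^ 2) :
    2 ∣ a ∧ 2 ∣ b ∧ 2 ∣ c := by
  have key : ∀ x : ℤ, (2 ∣ x ∧ x ^ 2 % 4 = 0) ∨ x ^ 2 % 4 = 1 := by
    intro x
    rcases Int.even_or_odd x with hx | hx
    · exact Or.inl ⟨hx.two_dvd, Int.emod_eq_zero_of_dvd (pow_dvd_pow_of_dvd hx.two_dvd 2)⟩
    · exact Or.inr (Int.sq_mod_four_eq_one_of_odd hx)
  have ha := key a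
  have hb := key b
  have hc := key c
  omega

/-- For a primitive integral octahedral sextuple (a,b,c,d,e,f),
we have a + f ≡ 2 (mod 4); in particular w = (a+f)/2 is an odd integer. -/
theorem octahedral_w_odd (a b c d e f : ℤ)
    (hlin1 : a + f = b + e) (hlin2 : a + f = c + d)
    (hquad : (a + f) ^ 2 - 4 * (a + f) * (a + b + c) + 4 * (a ^ 2 + b ^ 2 + c ^ 2) = 0)
    (hprim : Int.gcd a (Int.gcd b (Int.gcd c (Int.gcd d (Int.gcd e f)))) = 1) :
    (a + f) % 4 = 2 ∧ Odd ((a + f) / 2) := by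
  have hS : (2 : ℤ) ∣ a + f := by
    apply Int.prime_two.dvd_of_dvd_pow (n := 2)
    exact ⟨2 * ((a + f) * (a + b + c) - (a ^ 2 + b ^ 2 + c ^ 2)), by linear_combination hquad⟩
  obtain ⟨w, hw⟩ := hS
  have hw_odd : Odd w := by
    by_contra h
    obtain ⟨k, hk⟩ := (Int.not_odd_iff_even.mp h).two_dvd
    have h4 : (4 : ℤ) ∣ a ^ 2 + b ^ 2 + c ^ 2 := by
      refine ⟨k * (a + b + c) - k ^ 2, ?_⟩
      rw [hw, hk] at hquad
      linarith
    obtain ⟨ha, hb, hc⟩ := even_of_four_dvd_sum_three_sq h4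
    have hd : (2 : ℤ) ∣ d := by omega
    have he : (2 : ℤ) ∣ e := by omega
    have hf : (2 : ℤ) ∣ f := by omega
    have hg := Int.dvd_coe_gcd ha (Int.dvd_coe_gcd hb (Int.dvd_coe_gcd hc
      (Int.dvd_coe_gcd hd (Int.dvd_coe_gcd he hf))))
    rw [hprim] at hg
    norm_num at hg
  obtain ⟨m, hm⟩ := hw_odd
  exact ⟨by omega, m, by omega⟩
end

section
/- Let (a, b, c, d, e, f) be an integral octahedral sextuple (primitivity is not required). Then there exists an integer m such that a*b + a*c + b*c = 2*m^2. -/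
/-! Completing the square in the quadratic relation gives
`((a + f) - 2 * (a + b + c)) ^ 2 = 8 * (a * b + a * c + b * c)`. An integer whose square is divisible
by `8` is divisible by `4`, so the left side is `16 * m ^ 2`. -/

/-- For an integral octahedral sextuple (a,b,c,d,e,f),
there is an integer m with a*b + a*c + b*c = 2*m^2. -/
theorem octahedral_ab_ac_bc_twice_square (a b c d e f : ℤ)
    (hlin1 : a + f = b + e) (hlin2 : a + f = c + d)
    (hquad : (a + f) ^ 2 - 4 * (a + f) * (a + b + c) + 4 * (a ^ 2 + b ^ 2 + c ^ 2) = 0) :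
    ∃ m : ℤ, a * b + a * c + b * c = 2 * m ^ 2 := by
  have h : ((a + f) - 2 * (a + b + c)) ^ 2 = 8 * (a * b + a * c + b * c) := by
    linear_combination hquad
  generalize (a + f) - 2 * (a + b + c) = x at h
  obtain ⟨y, rfl⟩ : (2 : ℤ) ∣ x :=
    Int.prime_two.dvd_of_dvd_pow (n := 2) ⟨4 * (a * b + a * c + b * c), by linarith⟩
  obtain ⟨m, rfl⟩ : (2 : ℤ) ∣ y :=
    Int.prime_two.dvd_of_dvd_pow (n := 2) ⟨a * b + a * c + b * c, by linarith⟩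
  exact ⟨m, by linarith⟩
end

section
/- Let (a, b, c, d, e, f) be a primitive integral octahedral sextuple. Then exactly two of the six integers a, b, c, d, e, f are odd, and the two odd ones form a diagonal pair: either a and f are odd, or b and e are odd, or c and d are odd (with the remaining four even). -/
/-! The quadratic relation forces `a + f` to be even, say `a + f = 2 * w`. Putting `x = a - w`,
`y = b - w`, `z = c - w`, the six entries are `w ± x`, `w ± y`, `w ± z` and the quadratic relation
becomes `x ^ 2 + y ^ 2 + z ^ 2 = 2 * w ^ 2`. Squares are `0` or `1` modulo `4`. If `w` is even, then
`x`, `y`, `z` are all even, hence so are all six entries, contradicting primitivity. If `w` is odd,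
exactly one of `x`, `y`, `z` is even, and the corresponding pair `w ± x`, `w ± y` or `w ± z` is the
odd one. -/

theorem sq_emod_four_cases (n : ℤ) :
    (n % 2 = 0 ∧ n ^ 2 % 4 = 0) ∨ (n % 2 = 1 ∧ n ^ 2 % 4 = 1) := by
  rcases Int.even_or_odd' n with ⟨k, rfl | rfl⟩
  · left
    ring_nf
    omega
  · right
    ring_nf
    omega

/-- In a primitive integral octahedral sextuple exactly two entries
are odd, and they form a diagonal pair: (a,f), (b,e), or (c,d). -/
theorem octahedral_two_odd_diagonal (a b c d e f : ℤ)
    (hlin1 : a + f = b + e) (hlin2 : a + f = c + d)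
    (hquad : (a + f) ^ 2 - 4 * (a + f) * (a + b + c) + 4 * (a ^ 2 + b ^ 2 + c ^ 2) = 0)
    (hprim : Int.gcd a (Int.gcd b (Int.gcd c (Int.gcd d (Int.gcd e f)))) = 1) :
    (Odd a ∧ Odd f ∧ Even b ∧ Even c ∧ Even d ∧ Even e) ∨
    (Odd b ∧ Odd e ∧ Even a ∧ Even c ∧ Even d ∧ Even f) ∨
    (Odd c ∧ Odd d ∧ Even a ∧ Even b ∧ Even e ∧ Even f) := by
  obtain ⟨w, hw⟩ : ∃ w, a + f = 2 * w := by
    have hdvd : (2 : ℤ) ∣ (a + f) ^ 2 :=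
      ⟨2 * ((a + f) * (a + b + c)) - 2 * (a ^ 2 + b ^ 2 + c ^ 2), by linarith⟩
    exact Int.prime_two.dvd_of_dvd_pow hdvd
  have hsum : (a - w) ^ 2 + (b - w) ^ 2 + (c - w) ^ 2 = 2 * w ^ 2 := by
    rw [hw] at hquad
    linarith
  have hnot : ¬ (2 ∣ a ∧ 2 ∣ b ∧ 2 ∣ c ∧ 2 ∣ d ∧ 2 ∣ e ∧ 2 ∣ f) := by
    rintro ⟨ha, hb, hc, hd, he, hf⟩
    have h := Int.dvd_coe_gcd ha (Int.dvd_coe_gcd hb (Int.dvd_coe_gcd hc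
      (Int.dvd_coe_gcd hd (Int.dvd_coe_gcd he hf))))
    rw [hprim] at h
    omega
  simp only [Int.odd_iff, Int.even_iff]
  rcases sq_emod_four_cases (a - w) with hx | hx <;>
  rcases sq_emod_four_cases (b - w) with hy | hy <;>
  rcases sq_emod_four_cases (c - w) with hz | hz <;>
  rcases sq_emod_four_cases w with h | h <;>
  omega
end

section
/- Let (a, b, c, d, e, f) be a primitive integral octahedral sextuple. Then it is not the case that b ≡ 2 (mod 8) and c ≡ 6 (mod 8). (Here b and c are the curvatures of two tangent circles; by the symmetry of the relations in a, b, c this rules out residues (2,6) mod 8 for any tangent pair.) -/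
/-!
The quadratic relation forces `a + f = 2 * w` to be even, and then reads
`(w - a)² = 2 * w * (b + c) - (b² + c²)`. If `b ≡ 2` and `c ≡ 6` modulo `8`, then
`16 ∣ 2 * w * (b + c)` and `b² + c² ≡ 8 (mod 16)`, so `(w - a)² ≡ 8 (mod 16)`. But the squares
modulo `16` are `0, 1, 4, 9`.
-/

theorem sq_emod_sixteen_ne_eight (x : ℤ) : x ^ 2 % 16 ≠ 8 := by
  have h : ∀ y : ZMod 16, y ^ 2 ≠ 8 := by decide
  intro hx
  apply h x
  have := (ZMod.intCast_eq_intCast_iff (x ^ 2) 8 16).2 hx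
  exact_mod_cast this

/-- In a primitive integral octahedral sextuple, it cannot happen
that b ≡ 2 (mod 8) and c ≡ 6 (mod 8) for the tangent pair b, c. -/
theorem octahedral_no_two_six (a b c d e f : ℤ)
    (hlin1 : a + f = b + e) (hlin2 : a + f = c + d)
    (hquad : (a + f) ^ 2 - 4 * (a + f) * (a + b + c) + 4 * (a ^ 2 + b ^ 2 + c ^ 2) = 0)
    (hprim : Int.gcd a (Int.gcd b (Int.gcd c (Int.gcd d (Int.gcd e f)))) = 1) :
    ¬(b % 8 = 2 ∧ c % 8 = 6) := by
  rintro ⟨hb, hc⟩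
  obtain ⟨k, rfl⟩ : ∃ k, b = 8 * k + 2 := ⟨b / 8, by omega⟩
  obtain ⟨m, rfl⟩ : ∃ m, c = 8 * m + 6 := ⟨c / 8, by omega⟩
  have h_even : (2 : ℤ) ∣ a + f := by
    apply Int.prime_two.dvd_of_dvd_pow (n := 2)
    exact ⟨2 * (a + f) * (a + (8 * k + 2) + (8 * m + 6))
      - 2 * (a ^ 2 + (8 * k + 2) ^ 2 + (8 * m + 6) ^ 2), by linarith⟩
  obtain ⟨w, hw⟩ := h_even
  rw [hw] at hquad
  have h_sq : (w - a) ^ 2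
      = 16 * (w * (k + m + 1) - 4 * k ^ 2 - 2 * k - 4 * m ^ 2 - 6 * m - 3) + 8 := by
    linarith
  exact sq_emod_sixteen_ne_eight (w - a) (by omega)
end

section
/- Let (a, b, c, d, e, f) be a primitive integral octahedral sextuple and suppose a is odd. Then f is odd, a ≡ f (mod 8), and: if a + f ≡ 2 (mod 8) then a ≡ 1 (mod 8) or a ≡ 5 (mod 8); if a + f ≡ 6 (mod 8) then a ≡ 3 (mod 8) or a ≡ 7 (mod 8). -/
/-!
The quadratic relation forces `a + f` to be even, say `a + f = 2 * w`; this already makes `f` odd.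
In the coordinates `x = w - a`, `y = w - b`, `z = w - c` the quadratic relation becomes
`x ^ 2 + y ^ 2 + z ^ 2 = 2 * w ^ 2`. As `a = w - x` is odd, `w` and `x` have opposite parities, and
`four_dvd_of_sum_sq` gives `4 ∣ x`. Since `a - f = -2 * x`, this says `a ≡ f (mod 8)`. The last two
claims follow because `a + f ≡ 2 * a (mod 8)` determines `a` modulo `4`.
-/

/-- Squares modulo `8` decide everything: if `w` is even and `x` odd, the left side has one to three
odd squares and is not divisible by `8`; if `w` is odd and `x` even, then `y`, `z` are odd and
`x ^ 2 ≡ 0 (mod 8)`. -/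
lemma four_dvd_of_sum_sq {x y z w : ℤ} (h : x ^ 2 + y ^ 2 + z ^ 2 = 2 * w ^ 2)
    (hodd : Odd (w - x)) : 4 ∣ x := by
  have sq_mod (n : ℤ) : (n % 4 = 0 ∧ n ^ 2 % 8 = 0) ∨ (n % 4 = 2 ∧ n ^ 2 % 8 = 4) ∨
      (n % 2 = 1 ∧ n ^ 2 % 8 = 1) := by
    have h8 : n % 8 = 0 ∨ n % 8 = 1 ∨ n % 8 = 2 ∨ n % 8 = 3 ∨ n % 8 = 4 ∨ n % 8 = 5 ∨
        n % 8 = 6 ∨ n % 8 = 7 := by omega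
    have h2 : n ^ 2 % 8 = (n % 8) * (n % 8) % 8 := by rw [pow_two, Int.mul_emod]
    rcases h8 with h | h | h | h | h | h | h | h <;> rw [h] at h2 <;> omega
  obtain ⟨k, hk⟩ := hodd
  have hx := sq_mod x
  have hy := sq_mod y
  have hz := sq_mod z
  have hw := sq_mod w
  omega


/-- In a primitive integral octahedral sextuple with a odd,
f is odd, a ≡ f (mod 8), and if a+f ≡ 2 (mod 8) then a ≡ 1 or 5 (mod 8),
while if a+f ≡ 6 (mod 8) then a ≡ 3 or 7 (mod 8). -/
theorem octahedral_odd_residues (a b c d e f : ℤ)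
    (hlin1 : a + f = b + e) (hlin2 : a + f = c + d)
    (hquad : (a + f) ^ 2 - 4 * (a + f) * (a + b + c) + 4 * (a ^ 2 + b ^ 2 + c ^ 2) = 0)
    (hprim : Int.gcd a (Int.gcd b (Int.gcd c (Int.gcd d (Int.gcd e f)))) = 1)
    (ha : Odd a) :
    Odd f ∧ a % 8 = f % 8 ∧
    ((a + f) % 8 = 2 → a % 8 = 1 ∨ a % 8 = 5) ∧
    ((a + f) % 8 = 6 → a % 8 = 3 ∨ a % 8 = 7) := by
  have hs : Even (a + f) := by
    have h4 : Even ((a + f) ^ 2) :=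
      ⟨2 * ((a + f) * (a + b + c) - (a ^ 2 + b ^ 2 + c ^ 2)), by linarith⟩
    exact (Int.even_pow.mp h4).1
  obtain ⟨w, hw⟩ := hs
  have hsum : (w - a) ^ 2 + (w - b) ^ 2 + (w - c) ^ 2 = 2 * w ^ 2 := by
    rw [hw] at hquad
    linarith
  have hdvd : 4 ∣ w - a := four_dvd_of_sum_sq hsum (by simpa using ha)
  rw [Int.odd_iff] at ha ⊢
  omega
end

section
/- Let (a, b, c, d, e, f) be a primitive integral octahedral sextuple with a + b > 0. Then a + b is not congruent to 5 modulo 8 and not congruent to 7 modulo 8. (Here a and b are the curvatures of two tangent circles.) -/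
/-!
Writing `a + f = 2w`, the quadratic relation becomes
`(a + b) * (4w - a - b) = (a - b) ^ 2 + 2 * (c - w) ^ 2`,
so `n = a + b` divides a value of the form `v ^ 2 + 2 * z ^ 2`. If `n` is congruent to `5` or `7`
modulo `8`, some prime `p` congruent to `5` or `7` divides `n`; as `-2` is not a square modulo `p`,
such a prime divides both `v` and `z`, and hence `p ^ 2` divides `n * (4w - n)`. If `p` does not
divide the cofactor, `p ^ 2` can be removed from `n` without changing its class modulo `8`; by
descent some odd prime divides `n`, the cofactor, `v` and `z` simultaneously
(`exists_common_prime`). It then divides all six curvatures, against primitivity.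
-/

theorem exists_prime_five_seven (n : ℕ) (hn : n % 8 = 5 ∨ n % 8 = 7) :
    ∃ p : ℕ, p.Prime ∧ p ∣ n ∧ (p % 8 = 5 ∨ p % 8 = 7) := by
  by_contra! h
  -- `{1, 3}` is closed under multiplication modulo 8
  have key : ∀ k : ℕ, k ∣ n → k % 8 = 1 ∨ k % 8 = 3 := by
    intro k
    induction k using induction_on_primes with
    | zero => intro hk; have := Nat.eq_zero_of_zero_dvd hk; omega
    | one => intro _; left; rfl
    | prime_mul p k hp ih =>
      intro hk
      have hpn : p ∣ n := (Dvd.intro _ rfl).trans hk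
      have h1 := h p (Nat.prime_iff.2 hp.prime) hpn
      have h2 := ih ((Dvd.intro_left _ rfl).trans hk)
      have h3 : p % 2 = 1 := by
        rcases Nat.mod_two_eq_zero_or_one p with h0 | h0
        · have := (Nat.dvd_of_mod_eq_zero h0).trans hpn
          omega
        · exact h0
      have h4 : p % 8 = 1 ∨ p % 8 = 3 := by omega
      rcases h4 with h4 | h4 <;> rcases h2 with h2 | h2 <;> simp [Nat.mul_mod, h4, h2]
  have := key n dvd_rfl
  omega

/-- A prime congruent to `5` or `7` modulo `8` is inert in `ℤ[√-2]`. -/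
theorem dvd_of_dvd_sq_add_two_sq {p : ℕ} (hp : p.Prime) (h8 : p % 8 = 5 ∨ p % 8 = 7) {v z : ℤ}
    (h : (p : ℤ) ∣ v ^ 2 + 2 * z ^ 2) : (p : ℤ) ∣ v ∧ (p : ℤ) ∣ z := by
  have := Fact.mk hp
  have hz : (p : ℤ) ∣ z := by
    by_contra hz
    have hz' : (z : ZMod p) ≠ 0 := by rwa [Ne, ZMod.intCast_zmod_eq_zero_iff_dvd]
    have h0 : (v : ZMod p) ^ 2 + 2 * (z : ZMod p) ^ 2 = 0 := by
      have := (ZMod.intCast_zmod_eq_zero_iff_dvd _ p).2 h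
      push_cast at this
      exact this
    have hsq : IsSquare (-2 : ZMod p) := by
      refine ⟨(v : ZMod p) / z, ?_⟩
      field_simp
      linear_combination -h0
    have := (ZMod.exists_sq_eq_neg_two_iff (p := p) (by omega)).1 hsq
    omega
  refine ⟨?_, hz⟩
  have h1 : (p : ℤ) ∣ 2 * z ^ 2 := (dvd_pow hz two_ne_zero).mul_left 2
  exact (Nat.prime_iff_prime_int.1 hp).dvd_of_dvd_pow ((dvd_add_left h1).1 h)

theorem exists_common_prime (n : ℕ) : ∀ m v z : ℤ, (n % 8 = 5 ∨ n % 8 = 7) →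
    (n : ℤ) * m = v ^ 2 + 2 * z ^ 2 →
    ∃ p : ℕ, p.Prime ∧ p ∣ n ∧ (p : ℤ) ∣ m ∧ (p : ℤ) ∣ v ∧ (p : ℤ) ∣ z := by
  induction n using Nat.strong_induction_on with
  | _ n ih =>
  intro m v z hn h
  obtain ⟨p, hp, hpn, h8⟩ := exists_prime_five_seven n hn
  have hpZ := Nat.prime_iff_prime_int.1 hp
  have hp0 : (p : ℤ) ≠ 0 := hpZ.ne_zero
  obtain ⟨hv, hz⟩ := dvd_of_dvd_sq_add_two_sq hp h8
    (h ▸ (Int.natCast_dvd_natCast.2 hpn).mul_right m)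
  by_cases hm : (p : ℤ) ∣ m
  · exact ⟨p, hp, hpn, hm, hv, hz⟩
  obtain ⟨v', rfl⟩ := hv
  obtain ⟨z', rfl⟩ := hz
  obtain ⟨k, rfl⟩ := hpn
  have h1 : (k : ℤ) * m = p * (v' ^ 2 + 2 * z' ^ 2) := by
    apply mul_left_cancel₀ hp0
    push_cast at h
    linear_combination h
  have hk : p ∣ k := Int.natCast_dvd_natCast.1
    ((hpZ.dvd_or_dvd (Dvd.intro _ h1.symm)).resolve_right hm)
  obtain ⟨l, rfl⟩ := hk
  have h2 : (l : ℤ) * m = v' ^ 2 + 2 * z' ^ 2 := by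
    apply mul_left_cancel₀ hp0
    push_cast at h1
    linear_combination h1
  -- `p ^ 2` is `1` modulo 8, so removing it keeps the residue
  have hl : (p * (p * l)) % 8 = l % 8 := by
    rw [← mul_assoc, Nat.mul_mod]
    rcases h8 with h8 | h8 <;> simp [Nat.mul_mod p p, h8]
  have hlt : l < p * (p * l) := by
    have hl0 : 0 < l := by omega
    have := hp.two_le
    nlinarith [Nat.mul_le_mul this (Nat.mul_le_mul_right l this)]
  obtain ⟨q, hq, hql, hqm, hqv, hqz⟩ := ih l hlt m v' z' (by omega) h2
  exact ⟨q, hq, (hql.mul_left p).mul_left p, hqm, hqv.mul_left _, hqz.mul_left _⟩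

/-- In a primitive integral octahedral sextuple with a + b > 0,
a + b is not congruent to 5 or 7 modulo 8. -/
theorem octahedral_tangent_sum_not_five_seven (a b c d e f : ℤ)
    (hlin1 : a + f = b + e) (hlin2 : a + f = c + d)
    (hquad : (a + f) ^ 2 - 4 * (a + f) * (a + b + c) + 4 * (a ^ 2 + b ^ 2 + c ^ 2) = 0)
    (hprim : Int.gcd a (Int.gcd b (Int.gcd c (Int.gcd d (Int.gcd e f)))) = 1)
    (hpos : 0 < a + b) :
    (a + b) % 8 ≠ 5 ∧ (a + b) % 8 ≠ 7 := by
  by_contra hcon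
  have hn : (a + b) % 8 = 5 ∨ (a + b) % 8 = 7 := by omega
  have hs : (2 : ℤ) ∣ a + f := by
    apply Int.prime_two.dvd_of_dvd_pow (n := 2)
    exact ⟨2 * (a + f) * (a + b + c) - 2 * (a ^ 2 + b ^ 2 + c ^ 2), by linear_combination hquad⟩
  obtain ⟨w, hw⟩ := hs
  obtain ⟨n, hnn⟩ := Int.eq_ofNat_of_zero_le hpos.le
  rw [hw] at hquad
  have hmul : (n : ℤ) * (4 * w - a - b) = (a - b) ^ 2 + 2 * (c - w) ^ 2 := by
    rw [← hnn]
    linarith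
  obtain ⟨p, hp, hpn, hm, hv, hz⟩ := exists_common_prime n _ _ _ (by omega) hmul
  have hpZ := Nat.prime_iff_prime_int.1 hp
  have hpab : (p : ℤ) ∣ a + b := hnn ▸ Int.natCast_dvd_natCast.2 hpn
  have h2 : ¬ (p : ℤ) ∣ 2 := by
    intro h
    have hp2 : p = 2 := (Nat.prime_dvd_prime_iff_eq hp Nat.prime_two).1 (by exact_mod_cast h)
    subst hp2
    omega
  have half : ∀ x : ℤ, (p : ℤ) ∣ 2 * x → (p : ℤ) ∣ x := fun x hx =>
    (hpZ.dvd_or_dvd hx).resolve_left h2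
  have ha : (p : ℤ) ∣ a := half a (by
    rw [show 2 * a = (a + b) + (a - b) by ring]
    exact dvd_add hpab hv)
  have hb : (p : ℤ) ∣ b := (dvd_add_right ha).1 hpab
  have hpw : (p : ℤ) ∣ w := half w (half _ (by
    rw [show 2 * (2 * w) = (4 * w - a - b) + (a + b) by ring]
    exact dvd_add hm hpab))
  have hc : (p : ℤ) ∣ c := (dvd_sub_left hpw).1 hz
  have hs : (p : ℤ) ∣ a + f := hw ▸ hpw.mul_left 2
  have hf : (p : ℤ) ∣ f := (dvd_add_right ha).1 hs
  have he : (p : ℤ) ∣ e := (dvd_add_right hb).1 (hlin1 ▸ hs)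
  have hd : (p : ℤ) ∣ d := (dvd_add_right hc).1 (hlin2 ▸ hs)
  have := Int.dvd_coe_gcd ha (Int.dvd_coe_gcd hb (Int.dvd_coe_gcd hc
    (Int.dvd_coe_gcd hd (Int.dvd_coe_gcd he hf))))
  rw [hprim] at this
  exact hp.one_lt.ne' (Nat.dvd_one.1 (by exact_mod_cast this))
end

section
/- Let (a, b, c, d, e, f, g, h) be an integral cubic octuple (primitivity is not required). Then a + g is even, and there exists an integer m such that a*c + b*d = m^2. -/
/-!
Put `s = a + g`, so that `f = s - d` and `h = s - b`, whence `a + c + f + h = 2 * s` and the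
quadratic relation reads `3 * s ^ 2 = 2 * (a ^ 2 + c ^ 2 + f ^ 2 + h ^ 2)`; thus `s` is even.
Writing `s = 2 * w` and `t = a + c = b + d`, the relation becomes a quadratic equation in `w`
which, on completing the square, says `(w - t) ^ 2 = a * c + b * d`.
-/

/-- For an integral cubic octuple (a,...,h), a + g is even and
a*c + b*d is a perfect square. -/
theorem cubic_even_and_square (a b c d e f g h : ℤ)
    (hbd1 : a + g = b + h) (hbd2 : a + g = c + e) (hbd3 : a + g = d + f)
    (hfd : a + c = b + d)
    (hquad : 3 * (a + c + f + h) ^ 2 = 8 * (a ^ 2 + c ^ 2 + f ^ 2 + h ^ 2)) :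
    Even (a + g) ∧ ∃ m : ℤ, a * c + b * d = m ^ 2 := by
  obtain ⟨s, hs⟩ : ∃ s, s = a + g := ⟨_, rfl⟩
  rw [← hs] at hbd1 hbd3 ⊢
  obtain rfl : f = s - d := by linarith
  obtain rfl : h = s - b := by linarith
  obtain rfl : d = a + c - b := by linarith
  -- Since `a + c + f + h = 2 * s`, the quadratic relation makes `3 * s ^ 2` even.
  have h3 : 3 * s ^ 2 = 2 * (a ^ 2 + c ^ 2 + (s - (a + c - b)) ^ 2 + (s - b) ^ 2) := by
    linarith
  have hev : Even s := by
    have h2 : Even (3 * s ^ 2) := h3 ▸ even_two_mul _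
    simpa [Int.even_mul, Int.even_pow, show ¬ Even (3 : ℤ) by decide] using h2
  refine ⟨hev, ?_⟩
  obtain ⟨w, rfl⟩ := hev
  -- With `s = 2 * w`, completing the square in `w` gives `(w - (a + c)) ^ 2 = a * c + b * d`.
  exact ⟨w - (a + c), by linarith⟩
end

section
/- Let (a, b, c, d, e, f, g, h) be a primitive integral cubic octuple. Then exactly two of the four integers a, c, f, h are even and exactly two are odd. -/
/-!
Put `s = a + g`. The linear relations give `a + c + f + h = 2 s`, so an even number of
`a, c, f, h` are odd, and the quadratic relation becomes `3 s² = 2 (a² + c² + f² + h²)`.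
Hence `s = 2 t` and `a² + c² + f² + h² = 6 t²`.

If all four were odd, the left side would be `4` modulo `8`, whereas `6 t²` is `0` or `6`
modulo `8`. If all four were even, then so would be their opposites `s - a, …`, contradicting
primitivity. Only the case of two even and two odd integers remains.
-/

lemma odd_sq_eq_eight_mul_add_one {x : ℤ} (hx : Odd x) : ∃ k, x ^ 2 = 8 * k + 1 := by
  obtain ⟨m, rfl⟩ := hx
  obtain ⟨k, hk⟩ := Int.even_mul_succ_self m
  exact ⟨k, by linear_combination 4 * hk⟩

lemma not_all_odd {a c f h t : ℤ} (hsq : a ^ 2 + c ^ 2 + f ^ 2 + h ^ 2 = 6 * t ^ 2)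
    (ha : Odd a) (hc : Odd c) (hf : Odd f) (hh : Odd h) : False := by
  obtain ⟨i, hi⟩ := odd_sq_eq_eight_mul_add_one ha
  obtain ⟨j, hj⟩ := odd_sq_eq_eight_mul_add_one hc
  obtain ⟨k, hk⟩ := odd_sq_eq_eight_mul_add_one hf
  obtain ⟨l, hl⟩ := odd_sq_eq_eight_mul_add_one hh
  rcases Int.even_or_odd t with ⟨m, rfl⟩ | ht
  · have : (m + m) ^ 2 = 4 * m ^ 2 := by ring
    omega
  · obtain ⟨m, hm⟩ := odd_sq_eq_eight_mul_add_one ht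
    omega


/-- In a primitive integral cubic octuple, exactly two of
a, c, f, h are even and exactly two are odd. -/
theorem cubic_two_even_two_odd (a b c d e f g h : ℤ)
    (hbd1 : a + g = b + h) (hbd2 : a + g = c + e) (hbd3 : a + g = d + f)
    (hfd : a + c = b + d)
    (hquad : 3 * (a + c + f + h) ^ 2 = 8 * (a ^ 2 + c ^ 2 + f ^ 2 + h ^ 2))
    (hprim : Int.gcd a (Int.gcd b (Int.gcd c (Int.gcd d
      (Int.gcd e (Int.gcd f (Int.gcd g h)))))) = 1) :
    ((if Even a then 1 else 0) + (if Even c then 1 else 0)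
      + (if Even f then 1 else 0) + (if Even h then 1 else 0) : ℕ) = 2 ∧
    ((if Odd a then 1 else 0) + (if Odd c then 1 else 0)
      + (if Odd f then 1 else 0) + (if Odd h then 1 else 0) : ℕ) = 2 := by
  have hsum : a + c + f + h = 2 * (a + g) := by linarith
  have hs : 3 * (a + g) ^ 2 = 2 * (a ^ 2 + c ^ 2 + f ^ 2 + h ^ 2) := by
    rw [hsum] at hquad
    linarith
  have hse : Even (a + g) := by
    have h3 : Even (3 * (a + g) ^ 2) := hs ▸ even_two_mul _
    have h3' : ¬ Even (3 : ℤ) := by decide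
    exact ((Int.even_pow.mp ((Int.even_mul.mp h3).resolve_left h3')).1)
  obtain ⟨t, ht⟩ := hse
  have hsq : a ^ 2 + c ^ 2 + f ^ 2 + h ^ 2 = 6 * t ^ 2 := by
    rw [ht] at hs
    linarith
  have hodd : ¬ (Odd a ∧ Odd c ∧ Odd f ∧ Odd h) := fun ⟨ha, hc, hf, hh⟩ =>
    not_all_odd hsq ha hc hf hh
  have heven : ¬ (Even a ∧ Even c ∧ Even f ∧ Even h) := by
    rintro ⟨⟨a', ha⟩, ⟨c', hc⟩, ⟨f', hf⟩, ⟨h', hh⟩⟩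
    have hdvd : (2 : ℤ) ∣ Int.gcd a (Int.gcd b (Int.gcd c (Int.gcd d
        (Int.gcd e (Int.gcd f (Int.gcd g h)))))) := by
      iterate 7 refine Int.dvd_coe_gcd (by omega) ?_
      omega
    rw [hprim] at hdvd
    omega
  clear hquad hs hsq hprim
  simp only [Int.even_iff, Int.odd_iff] at *
  rcases Int.emod_two_eq_zero_or_one a with ha | ha <;>
  rcases Int.emod_two_eq_zero_or_one c with hc | hc <;>
  rcases Int.emod_two_eq_zero_or_one f with hf | hf <;>
  rcases Int.emod_two_eq_zero_or_one h with hh | hh <;>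
  first
  | omega
  | simp [ha, hc, hf, hh]
end

section
/- Let (a, b, c, d, e, f, g, h) be a primitive integral cubic octuple. Then a + g ≡ 2 (mod 4); in particular the common value w = a + g = b + h = c + e = d + f satisfies w ≡ 2 (mod 4). -/
/-!
The linear relations give `a + c + f + h = 2 * w` with `w = a + g`, so the quadratic relation
becomes `3 * w ^ 2 = 2 * (a ^ 2 + c ^ 2 + f ^ 2 + h ^ 2)`, which forces `w` to be even. If `4 ∣ w`,
then `a ^ 2 + c ^ 2 + f ^ 2 + h ^ 2` is divisible by `8`; a sum of four squares divisible by `8` has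
all four terms even. Since `w` is even too, all eight curvatures are even, contradicting
primitivity.
-/

lemma sq_emod_eight (x : ℤ) : (x % 2 = 1 ∧ x ^ 2 % 8 = 1) ∨
    (x % 2 = 0 ∧ (x ^ 2 % 8 = 0 ∨ x ^ 2 % 8 = 4)) := by
  have h : x % 8 = 0 ∨ x % 8 = 1 ∨ x % 8 = 2 ∨ x % 8 = 3 ∨ x % 8 = 4 ∨ x % 8 = 5 ∨
      x % 8 = 6 ∨ x % 8 = 7 := by omega
  rcases h with h | h | h | h | h | h | h | h <;>
    have h2 : x ^ 2 % 8 = (x % 8) ^ 2 % 8 := ((Int.mod_modEq x 8).pow 2).symm <;>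
    rw [h] at h2 <;> norm_num at h2 <;> omega

/-- If `8` divides a sum of four squares, then all four terms are even, since an odd
square is `1` and an even one `0` or `4` modulo `8`. -/
lemma even_of_eight_dvd_sum_four_sq {x y z t : ℤ} (h : (8 : ℤ) ∣ x ^ 2 + y ^ 2 + z ^ 2 + t ^ 2) :
    x % 2 = 0 ∧ y % 2 = 0 ∧ z % 2 = 0 ∧ t % 2 = 0 := by
  have hx := sq_emod_eight x
  have hy := sq_emod_eight y
  have hz := sq_emod_eight z
  have ht := sq_emod_eight t
  omega

/-- In a primitive integral cubic octuple, a + g ≡ 2 (mod 4);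
hence the common value w = a+g = b+h = c+e = d+f satisfies w ≡ 2 (mod 4). -/
theorem cubic_w_two_mod_four (a b c d e f g h : ℤ)
    (hbd1 : a + g = b + h) (hbd2 : a + g = c + e) (hbd3 : a + g = d + f)
    (hfd : a + c = b + d)
    (hquad : 3 * (a + c + f + h) ^ 2 = 8 * (a ^ 2 + c ^ 2 + f ^ 2 + h ^ 2))
    (hprim : Int.gcd a (Int.gcd b (Int.gcd c (Int.gcd d
      (Int.gcd e (Int.gcd f (Int.gcd g h)))))) = 1) :
    (a + g) % 4 = 2 := by
  have hsum : a + c + f + h = 2 * (a + g) := by linarith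
  have hq : 3 * (a + g) ^ 2 = 2 * (a ^ 2 + c ^ 2 + f ^ 2 + h ^ 2) := by
    rw [hsum] at hquad
    linarith
  have hw : (a + g) % 2 = 0 := by
    have := sq_emod_eight (a + g)
    omega
  by_contra hne
  obtain ⟨k, hk⟩ : (4 : ℤ) ∣ a + g := by omega
  have h8 : (8 : ℤ) ∣ a ^ 2 + c ^ 2 + f ^ 2 + h ^ 2 := by
    rw [hk] at hq
    exact ⟨3 * k ^ 2, by linarith⟩
  obtain ⟨ha, hc, hf, hh⟩ := even_of_eight_dvd_sum_four_sq h8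
  have h2 : (2 : ℤ) ∣ (Int.gcd a (Int.gcd b (Int.gcd c (Int.gcd d
      (Int.gcd e (Int.gcd f (Int.gcd g h)))))) : ℤ) := by
    repeat' apply Int.dvd_coe_gcd
    all_goals omega
  rw [hprim] at h2
  norm_num at h2
end

section
/- Let (a, b, c, d, e, f, g, h) be a primitive integral cubic octuple. Then none of the twelve face-diagonal sums a+c, b+d, a+h, d+e, a+f, b+e, b+g, c+f, c+h, d+g, e+g, f+h is congruent to 0 modulo 4. -/
/-!
Write `S = a + g` for the common sum of opposite pairs. The face relation gives
`a + c + f + h = 2 * S`, so the quadratic relation becomes `3 * S ^ 2 = 2 * (a² + c² + f² + h²)`;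
hence `S = 2 * T`, with `a + c + f + h = 4 * T` and `a² + c² + f² + h² = 6 * T ^ 2`.
Modulo 4 each of the twelve face-diagonal sums is, up to sign, one of `a + c`, `a + h`, `a + f`.
If one of these, say `a + c`, vanishes modulo 4, then so does `f + h`, and
`a² + c² ≡ 2 * a²`, `f² + h² ≡ 2 * f²` modulo 8. The quadratic relation then reads
`a² + f² + T² ≡ 0` modulo 4, which forces `a`, `f`, `T` to be even; consequently all eight
curvatures are even, contradicting primitivity.
-/

/-- Three integers whose squares sum to a multiple of 4 are even; only the first two are
recorded, the third being the half-sum of an opposite pair. -/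
lemma even_of_four_dvd_sum_sq (x y z : ℤ) (h : (4 : ℤ) ∣ x ^ 2 + y ^ 2 + z ^ 2) :
    (2 : ℤ) ∣ x ∧ (2 : ℤ) ∣ y := by
  obtain ⟨k, hk⟩ := h
  rcases Int.even_or_odd' x with ⟨p, rfl | rfl⟩ <;>
  rcases Int.even_or_odd' y with ⟨q, rfl | rfl⟩ <;>
  rcases Int.even_or_odd' z with ⟨r, rfl | rfl⟩ <;>
  ring_nf at hk <;> omega

/-- The four mutually non-adjacent curvatures `a`, `c`, `f`, `h` are all even as soon as one
pair of them has sum divisible by 4. The hypotheses are symmetric in the four variables, so this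
covers every choice of pair. -/
lemma even_of_four_dvd_add (a c f h T : ℤ) (hs : a + c + f + h = 4 * T)
    (hq : a ^ 2 + c ^ 2 + f ^ 2 + h ^ 2 = 6 * T ^ 2) (hac : (4 : ℤ) ∣ a + c) :
    (2 : ℤ) ∣ a ∧ (2 : ℤ) ∣ c ∧ (2 : ℤ) ∣ f ∧ (2 : ℤ) ∣ h := by
  obtain ⟨k, hk⟩ := hac
  obtain rfl : c = 4 * k - a := by linarith
  obtain rfl : h = 4 * (T - k) - f := by linarith
  -- The cofactor is obtained by substituting `c` and `h` in `hq` and dividing by 2.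
  have key : (4 : ℤ) ∣ a ^ 2 + f ^ 2 + T ^ 2 :=
    ⟨T ^ 2 - 2 * k ^ 2 + k * a - 2 * (T - k) ^ 2 + (T - k) * f, by linarith⟩
  have := even_of_four_dvd_sum_sq a f T key
  omega


/-- In a primitive integral cubic octuple, none of the twelve
face-diagonal sums is congruent to 0 modulo 4. -/
theorem cubic_face_diagonals_nonzero_mod_four (a b c d e f g h : ℤ)
    (hbd1 : a + g = b + h) (hbd2 : a + g = c + e) (hbd3 : a + g = d + f)
    (hfd : a + c = b + d)
    (hquad : 3 * (a + c + f + h) ^ 2 = 8 * (a ^ 2 + c ^ 2 + f ^ 2 + h ^ 2))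
    (hprim : Int.gcd a (Int.gcd b (Int.gcd c (Int.gcd d
      (Int.gcd e (Int.gcd f (Int.gcd g h)))))) = 1) :
    (a + c) % 4 ≠ 0 ∧ (b + d) % 4 ≠ 0 ∧ (a + h) % 4 ≠ 0 ∧ (d + e) % 4 ≠ 0 ∧
    (a + f) % 4 ≠ 0 ∧ (b + e) % 4 ≠ 0 ∧ (b + g) % 4 ≠ 0 ∧ (c + f) % 4 ≠ 0 ∧
    (c + h) % 4 ≠ 0 ∧ (d + g) % 4 ≠ 0 ∧ (e + g) % 4 ≠ 0 ∧ (f + h) % 4 ≠ 0 := by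
  obtain ⟨T, hT⟩ : ∃ T, a + g = 2 * T := by
    have hsum : a + c + f + h = 2 * (a + g) := by linarith
    rw [hsum] at hquad
    have h2 : Even ((a + g) ^ 2) := by
      rw [Int.even_iff]
      have h3 : 3 * (a + g) ^ 2 = 2 * (a ^ 2 + c ^ 2 + f ^ 2 + h ^ 2) := by linarith
      omega
    exact (Int.even_pow.mp h2).1.two_dvd
  have hs : a + c + f + h = 4 * T := by linarith
  have hq : a ^ 2 + c ^ 2 + f ^ 2 + h ^ 2 = 6 * T ^ 2 := by
    rw [hs] at hquad
    linarith
  have hnot : ¬ ((2 : ℤ) ∣ a ∧ (2 : ℤ) ∣ c ∧ (2 : ℤ) ∣ f ∧ (2 : ℤ) ∣ h) := by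
    rintro ⟨ha, hc, hf, hh⟩
    have hb : (2 : ℤ) ∣ b := by omega
    have hd : (2 : ℤ) ∣ d := by omega
    have he : (2 : ℤ) ∣ e := by omega
    have hg : (2 : ℤ) ∣ g := by omega
    have hdvd := Int.dvd_coe_gcd ha (Int.dvd_coe_gcd hb (Int.dvd_coe_gcd hc (Int.dvd_coe_gcd hd
      (Int.dvd_coe_gcd he (Int.dvd_coe_gcd hf (Int.dvd_coe_gcd hg hh))))))
    rw [hprim] at hdvd
    norm_num at hdvd
  have hac : ¬ (4 : ℤ) ∣ a + c := fun H => hnot (even_of_four_dvd_add a c f h T hs hq H)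
  have hah : ¬ (4 : ℤ) ∣ a + h := fun H => by
    have := even_of_four_dvd_add a h c f T (by linarith) (by linarith) H
    tauto
  have haf : ¬ (4 : ℤ) ∣ a + f := fun H => by
    have := even_of_four_dvd_add a f c h T (by linarith) (by linarith) H
    tauto
  clear hquad hq hprim hnot
  refine ⟨?_, ?_, ?_, ?_, ?_, ?_, ?_, ?_, ?_, ?_, ?_, ?_⟩ <;> omega
end

section
/- Let (a, b, c, d, e, f, g, h) be a primitive integral cubic octuple with a + b > 0. Then a + b is not congruent to 5 modulo 8 and not congruent to 7 modulo 8. (Here a and b are the curvatures of two tangent circles, corresponding to adjacent vertices of the cube.) -/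
/-!
Put `n = a + b`, let `m = (a + g) / 2` be half the common sum of opposite curvatures (the quadratic
relation forces `a + g` to be even), and let `u = d - m - a`, `M = 2 * m - d - n + 3 * a`. The
relations then give the equation `n * M = u ^ 2 + 2 * a ^ 2`, and primitivity of
the octuple implies that `n`, `a`, `u`, `M` have no common prime factor. If `n` is odd and coprime to
`a`, then `-2` is a square modulo `n`, so the Jacobi symbol `(-2 / n)` is `1` and `n` is `1` or `3`
modulo `8`. Otherwise a prime `p` dividing both `n` and `a` divides `u`, hence not `M`, so
`p ^ 2 ∣ n`; dividing `n` by `p ^ 2`, which is `1` modulo `8`, and `u`, `a` by `p` gives a smaller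
instance.
-/

/-- When `n` is coprime to `a`, the equation makes `-2` a square modulo `n`. -/
lemma mod_eight_of_coprime (n : ℕ) (a u M : ℤ) (hodd : n % 2 = 1)
    (h : (n : ℤ) * M = u ^ 2 + 2 * a ^ 2) (hc : Int.gcd a n = 1) :
    n % 8 ≠ 5 ∧ n % 8 ≠ 7 := by
  have hJ : jacobiSym (u ^ 2) n = jacobiSym (-2 * a ^ 2) n := by
    apply jacobiSym.mod_left'
    apply Int.ModEq.eq
    exact (Int.modEq_iff_dvd.mpr ⟨-M, by linarith⟩)
  rw [jacobiSym.mul_left, jacobiSym.sq_one' hc, mul_one, jacobiSym.pow_left,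
    jacobiSym.at_neg_two (Nat.odd_iff.mpr hodd), ZMod.χ₈'_nat_eq_if_mod_eight] at hJ
  have h0 := sq_nonneg (jacobiSym u n)
  split_ifs at hJ <;> omega

/-- Descent on `n`, removing the square of a prime common to `n` and `a`. -/
lemma mod_eight_of_primitive (n : ℕ) : ∀ (a u M : ℤ), n % 2 = 1 →
    (n : ℤ) * M = u ^ 2 + 2 * a ^ 2 →
    (∀ p : ℕ, p.Prime → (p : ℤ) ∣ n → (p : ℤ) ∣ a → (p : ℤ) ∣ u → ¬ (p : ℤ) ∣ M) →
    n % 8 ≠ 5 ∧ n % 8 ≠ 7 := by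
  induction n using Nat.strong_induction_on with
  | _ n ih =>
  intro a u M hodd h hp
  by_cases hc : Int.gcd a n = 1
  · exact mod_eight_of_coprime n a u M hodd h hc
  obtain ⟨p, pp, hpg⟩ := Nat.exists_prime_and_dvd hc
  have pa : (p : ℤ) ∣ a := (Int.natCast_dvd_natCast.mpr hpg).trans (Int.gcd_dvd_left ..)
  have pn : (p : ℤ) ∣ n := (Int.natCast_dvd_natCast.mpr hpg).trans (Int.gcd_dvd_right ..)
  have pZ : Prime (p : ℤ) := Nat.prime_iff_prime_int.mp pp
  have pu : (p : ℤ) ∣ u := by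
    apply pZ.dvd_of_dvd_pow (n := 2)
    have e : u ^ 2 = n * M - 2 * a ^ 2 := by linarith
    rw [e]
    exact dvd_sub (pn.mul_right _) ((pa.pow two_ne_zero).mul_left _)
  have pM := hp p pp pn pa pu
  obtain ⟨a', rfl⟩ := pa
  obtain ⟨u', rfl⟩ := pu
  have hsq : (p : ℤ) ^ 2 ∣ n * M := ⟨u' ^ 2 + 2 * a' ^ 2, by rw [h]; ring⟩
  have hcop : IsCoprime ((p : ℤ) ^ 2) M := (pZ.coprime_iff_not_dvd.mpr pM).pow_left
  have hn : p ^ 2 ∣ n := by exact_mod_cast hcop.dvd_of_dvd_mul_right hsq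
  obtain ⟨k, rfl⟩ := hn
  have podd : p % 2 = 1 := by
    rw [← Nat.odd_iff] at hodd ⊢
    exact Nat.Odd.of_mul_left (by simpa [sq, mul_assoc] using hodd)
  have kodd : k % 2 = 1 := by
    rw [← Nat.odd_iff] at hodd ⊢
    exact Nat.Odd.of_mul_right hodd
  have p8 : p ^ 2 % 8 = 1 := by
    have : p % 8 = 1 ∨ p % 8 = 3 ∨ p % 8 = 5 ∨ p % 8 = 7 := by omega
    rcases this with h | h | h | h <;> simp [Nat.pow_mod, h]
  have hmod : p ^ 2 * k % 8 = k % 8 := by simp [Nat.mul_mod, p8]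
  rw [hmod]
  apply ih k _ a' u' M kodd
  · have : (p : ℤ) ^ 2 ≠ 0 := pow_ne_zero _ pZ.ne_zero
    apply mul_left_cancel₀ this
    push_cast at h
    linarith
  · intro q pq qk qa qu
    apply hp q pq _ (qa.mul_left _) (qu.mul_left _)
    push_cast
    exact qk.mul_left _
  · have hk : 0 < k := by omega
    exact lt_mul_of_one_lt_left hk (Nat.one_lt_pow two_ne_zero pp.one_lt)


/-- In a primitive integral cubic octuple with a + b > 0,
a + b is not congruent to 5 or 7 modulo 8. -/
theorem cubic_tangent_sum_not_five_seven (a b c d e f g h : ℤ)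
    (hbd1 : a + g = b + h) (hbd2 : a + g = c + e) (hbd3 : a + g = d + f)
    (hfd : a + c = b + d)
    (hquad : 3 * (a + c + f + h) ^ 2 = 8 * (a ^ 2 + c ^ 2 + f ^ 2 + h ^ 2))
    (hprim : Int.gcd a (Int.gcd b (Int.gcd c (Int.gcd d
      (Int.gcd e (Int.gcd f (Int.gcd g h)))))) = 1)
    (hpos : 0 < a + b) :
    (a + b) % 8 ≠ 5 ∧ (a + b) % 8 ≠ 7 := by
  obtain ⟨m, hm⟩ : (2 : ℤ) ∣ a + g := by
    have hs : a + c + f + h = 2 * (a + g) := by linarith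
    rw [hs] at hquad
    have h2 : (2 : ℤ) ∣ 3 * (a + g) ^ 2 := ⟨a ^ 2 + c ^ 2 + f ^ 2 + h ^ 2, by linarith⟩
    rcases Int.prime_two.dvd_or_dvd h2 with h3 | h3
    · norm_num at h3
    · exact Int.prime_two.dvd_of_dvd_pow h3
  obtain rfl : c = b + d - a := by linarith
  obtain rfl : g = 2 * m - a := by linarith
  obtain rfl : h = 2 * m - b := by linarith
  obtain rfl : f = 2 * m - d := by linarith
  obtain rfl : e = 2 * m - (b + d - a) := by linarith
  by_cases hodd : (a + b) % 2 = 1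
  swap
  · omega
  obtain ⟨n, hn⟩ := Int.eq_ofNat_of_zero_le hpos.le
  have key := mod_eight_of_primitive n a (d - m - a) (2 * m - d - (a + b) + 3 * a) (by omega)
    (by rw [← hn]; linarith) (by
      intro p pp pn pa pu pM
      rw [← hn] at pn
      have pb : (p : ℤ) ∣ b := (dvd_add_right pa).mp pn
      have pm : (p : ℤ) ∣ m := by
        have : m = (2 * m - d - (a + b) + 3 * a) + (d - m - a) + b - a := by ring
        rw [this]
        exact dvd_sub (dvd_add (dvd_add pM pu) pb) pa
      have pd : (p : ℤ) ∣ d := by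
        have : d = (d - m - a) + m + a := by ring
        rw [this]
        exact dvd_add (dvd_add pu pm) pa
      have pc : (p : ℤ) ∣ b + d - a := dvd_sub (dvd_add pb pd) pa
      have p2m : (p : ℤ) ∣ 2 * m := pm.mul_left 2
      have hd := Int.dvd_coe_gcd pa <| Int.dvd_coe_gcd pb <| Int.dvd_coe_gcd pc <|
        Int.dvd_coe_gcd pd <| Int.dvd_coe_gcd (dvd_sub p2m pc) <|
        Int.dvd_coe_gcd (dvd_sub p2m pd) <|
        Int.dvd_coe_gcd (dvd_sub p2m pa) (dvd_sub p2m pb)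
      rw [hprim] at hd
      exact pp.one_lt.ne' (Nat.dvd_one.mp (by exact_mod_cast hd)))
  omega
end

section
/- Let j, k, l, m be integers satisfying (j - 3k)^2 + (m - 3l)^2 = 2(j + k)(m + l), and suppose k is odd. Then there exists an integer n with (k + j)(k + l) = 2(k^2 + n^2); in particular (k + j)(k + l) is nonzero and its 2-adic valuation equals 1 or 2. -/
/-!
Completing the square in `m`, the relation reads
`(m - 3l - j - k)² = 8 ((k + j)(k + l) - 2k²)`. The square on the left is divisible by 8, so its
root is `4n` for some integer `n`, which gives `(k + j)(k + l) = 2(k² + n²)`. Since `k` is odd,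
`k² + n²` is odd when `n` is even and twice an odd number when `n` is odd.
-/

lemma padicValInt_two_pow_mul_odd (a : ℕ) {o : ℤ} (ho : Odd o) :
    padicValInt 2 (2 ^ a * o) = a := by
  have h0 : o ≠ 0 := by rintro rfl; simp at ho
  have h2 : padicValInt 2 o = 0 := by
    apply padicValInt.eq_zero_of_not_dvd
    rw [← Int.not_even_iff_odd, even_iff_two_dvd] at ho
    exact_mod_cast ho
  rw [padicValInt.mul (by positivity) h0, h2, padicValInt]
  simp [Int.natAbs_pow]

/-- For integers j, k, l, m with (j-3k)^2 + (m-3l)^2 = 2(j+k)(m+l)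
and k odd, there is an integer n with (k+j)(k+l) = 2(k^2+n^2); in particular
(k+j)(k+l) is nonzero and its 2-adic valuation is 1 or 2. -/
theorem square_valuation_one_or_two (j k l m : ℤ)
    (hquad : (j - 3 * k) ^ 2 + (m - 3 * l) ^ 2 = 2 * (j + k) * (m + l))
    (hk : Odd k) :
    (∃ n : ℤ, (k + j) * (k + l) = 2 * (k ^ 2 + n ^ 2)) ∧
    (k + j) * (k + l) ≠ 0 ∧
    (padicValInt 2 ((k + j) * (k + l)) = 1 ∨ padicValInt 2 ((k + j) * (k + l)) = 2) := by
  have hsq : (m - 3 * l - j - k) ^ 2 = 8 * ((k + j) * (k + l) - 2 * k ^ 2) := by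
    linear_combination hquad
  obtain ⟨c, hc⟩ : (2 : ℤ) ∣ m - 3 * l - j - k :=
    Int.prime_two.dvd_of_dvd_pow (n := 2) ⟨4 * ((k + j) * (k + l) - 2 * k ^ 2), by rw [hsq]; ring⟩
  rw [hc] at hsq
  obtain ⟨n, rfl⟩ : (2 : ℤ) ∣ c :=
    Int.prime_two.dvd_of_dvd_pow (n := 2) ⟨(k + j) * (k + l) - 2 * k ^ 2, by linarith⟩
  have hn : (k + j) * (k + l) = 2 * (k ^ 2 + n ^ 2) := by linarith
  have hk0 : k ≠ 0 := by rintro rfl; simp at hk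
  refine ⟨⟨n, hn⟩, by rw [hn]; positivity, ?_⟩
  rw [hn]
  rcases Int.even_or_odd n with he | ho
  · left
    have := padicValInt_two_pow_mul_odd 1 (hk.pow.add_even (he.pow_of_ne_zero two_ne_zero) :
      Odd (k ^ 2 + n ^ 2))
    simpa using this
  · right
    obtain ⟨a, rfl⟩ := hk
    obtain ⟨b, rfl⟩ := ho
    have := padicValInt_two_pow_mul_odd 2
      (⟨a ^ 2 + a + b ^ 2 + b, rfl⟩ : Odd (2 * (a ^ 2 + a + b ^ 2 + b) + 1))
    rw [show 2 * ((2 * a + 1) ^ 2 + (2 * b + 1) ^ 2) =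
      2 ^ 2 * (2 * (a ^ 2 + a + b ^ 2 + b) + 1) by ring]
    exact this
end

section
/- Let j, k, l, m be integers satisfying (j - 3k)^2 + (m - 3l)^2 = 2(j + k)(m + l), with gcd(j, k, l) = 1 and j + k > 0. Then j + k is not congruent to 3, 6, or 7 modulo 8. (Here j and k are curvatures of two tangent circles.) -/
/-!
Put `n = j + k` and `t = m - 3l - n`. Completing the square in `m` turns the hypothesis into
`t ^ 2 = 8 n (k + l) - 16 k ^ 2`, so `4 ∣ t`, and `t = 4 s` gives
`2 (s ^ 2 + k ^ 2) = n (k + l)`. Hence, for `q = n` with `n` odd, or `q = n / 2` with `n ≡ 6 mod 8`,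
there is `w` with `s ^ 2 + k ^ 2 = q w`. A prime `p ≡ 3 mod 4` dividing `q` divides both `s` and
`k`, and so, by primitivity, does not divide `w`. Therefore the exponent of `p` in `q` equals its
exponent in a sum of two squares, which is even. So `q` is itself a sum of two squares, and cannot
be `3 mod 4`.
-/

/-- A divisor `q` of a sum of two squares `a ^ 2 + b ^ 2 = q * w` is not `3` modulo `4`, provided
that no prime divides all of `q`, `a`, `b` and the cofactor `w`. -/
lemma mod_four_ne_three_of_sq_add_sq_eq_mul {a b q w : ℕ} (h : a ^ 2 + b ^ 2 = q * w)
    (hq : q ≠ 0)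
    (hc : ∀ p : ℕ, p.Prime → p % 4 = 3 → p ∣ q → p ∣ a → p ∣ b → ¬ p ∣ w) : q % 4 ≠ 3 := by
  have hsum : ∃ x y, q = x ^ 2 + y ^ 2 := by
    rw [Nat.eq_sq_add_sq_iff]
    intro p hp hp3
    have hpp := Nat.prime_of_mem_primeFactors hp
    have hpq := Nat.dvd_of_mem_primeFactors hp
    have : Fact p.Prime := ⟨hpp⟩
    have hz : (a : ZMod p) ^ 2 + (b : ZMod p) ^ 2 = 0 := by
      have : ((a ^ 2 + b ^ 2 : ℕ) : ZMod p) = 0 := by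
        rw [ZMod.natCast_eq_zero_iff, h]
        exact hpq.mul_right w
      exact_mod_cast this
    -- `-1` is not a square modulo `p`, so `p` divides both terms.
    have hb : p ∣ b := by
      rw [← ZMod.natCast_eq_zero_iff]
      by_contra hb
      exact ZMod.mod_four_ne_three_of_sq_eq_neg_sq' hb (eq_neg_of_add_eq_zero_left hz) hp3
    have ha : p ∣ a := by
      rw [← ZMod.natCast_eq_zero_iff]
      by_contra ha
      exact ZMod.mod_four_ne_three_of_sq_eq_neg_sq' ha (eq_neg_of_add_eq_zero_right hz) hp3
    have hw := hc p hpp hp3 hpq ha hb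
    have hw0 : w ≠ 0 := by
      rintro rfl
      exact hw (dvd_zero p)
    have hval : padicValNat p (q * w) = padicValNat p q := by
      rw [padicValNat.mul hq hw0, padicValNat.eq_zero_of_not_dvd hw, add_zero]
    rw [← hval]
    exact Nat.eq_sq_add_sq_iff.mp ⟨a, b, h.symm⟩ p
      (Nat.mem_primeFactors.mpr ⟨hpp, hpq.mul_right w, mul_ne_zero hq hw0⟩) hp3
  obtain ⟨x, y, rfl⟩ := hsum
  have hx : x ^ 2 % 4 = 0 ∨ x ^ 2 % 4 = 1 := by
    have : x % 4 < 4 := Nat.mod_lt _ (by norm_num)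
    rw [Nat.pow_mod]
    interval_cases x % 4 <;> simp
  have hy : y ^ 2 % 4 = 0 ∨ y ^ 2 % 4 = 1 := by
    have : y % 4 < 4 := Nat.mod_lt _ (by norm_num)
    rw [Nat.pow_mod]
    interval_cases y % 4 <;> simp
  omega

/-- For integers j, k, l, m with (j-3k)^2 + (m-3l)^2 = 2(j+k)(m+l),
gcd(j,k,l) = 1 and j + k > 0, the sum j + k is not ≡ 3, 6 or 7 (mod 8). -/
theorem square_tangent_sum_not_three_six_seven (j k l m : ℤ)
    (hquad : (j - 3 * k) ^ 2 + (m - 3 * l) ^ 2 = 2 * (j + k) * (m + l))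
    (hprim : Int.gcd j (Int.gcd k l) = 1)
    (hpos : 0 < j + k) :
    (j + k) % 8 ≠ 3 ∧ (j + k) % 8 ≠ 6 ∧ (j + k) % 8 ≠ 7 := by
  have ht : (m - 3 * l - (j + k)) ^ 2 = 8 * ((j + k) * (k + l) - 2 * k ^ 2) := by
    linear_combination hquad
  obtain ⟨s, hs⟩ : (4 : ℤ) ∣ m - 3 * l - (j + k) := by
    generalize m - 3 * l - (j + k) = t at ht
    have h8 : t ^ 2 % 8 = 0 := by omega
    have hlt : t % 8 < 8 := Int.emod_lt_of_pos _ (by norm_num)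
    have hge : 0 ≤ t % 8 := Int.emod_nonneg _ (by norm_num)
    rw [pow_two, Int.mul_emod] at h8
    interval_cases h : t % 8 <;> omega
  have hmain : 2 * (s ^ 2 + k ^ 2) = (j + k) * (k + l) := by
    rw [hs] at ht
    linarith
  have key : ∀ q w : ℤ, 0 < q → q ∣ j + k → s ^ 2 + k ^ 2 = q * w →
      (∀ p : ℤ, p ∣ w → p ∣ k + l) → q % 4 ≠ 3 := by
    intro q w hq hqn hqw hwl
    have hnat : s.natAbs ^ 2 + k.natAbs ^ 2 = q.natAbs * w.natAbs := by
      rw [← Int.natAbs_mul, ← hqw]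
      zify
      rw [sq_abs, sq_abs, abs_of_nonneg (by positivity)]
    have := mod_four_ne_three_of_sq_add_sq_eq_mul hnat (by omega) ?_
    · omega
    · intro p hp _ hpq _ hpk hpw
      have hpk' : (p : ℤ) ∣ k := Int.natCast_dvd.mpr hpk
      have hpl : (p : ℤ) ∣ l := (dvd_add_right hpk').mp (hwl p (Int.natCast_dvd.mpr hpw))
      have hpj : (p : ℤ) ∣ j := (dvd_add_left hpk').mp ((Int.natCast_dvd.mpr hpq).trans hqn)
      have h1 : (p : ℤ) ∣ (Int.gcd j (Int.gcd k l) : ℤ) :=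
        Int.dvd_coe_gcd hpj (Int.dvd_coe_gcd hpk' hpl)
      rw [hprim] at h1
      exact hp.one_lt.ne' (Nat.dvd_one.mp (by exact_mod_cast h1))
  have hodd : (j + k) % 2 = 1 → (j + k) % 4 ≠ 3 := by
    intro ho
    obtain ⟨w, hw⟩ : (2 : ℤ) ∣ k + l := by
      have h2 : (2 : ℤ) ∣ (j + k) * (k + l) := ⟨_, hmain.symm⟩
      rcases Int.prime_two.dvd_or_dvd h2 with h | h
      · omega
      · exact h
    refine key (j + k) w hpos dvd_rfl ?_ fun p hp => hw ▸ hp.mul_left 2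
    rw [hw] at hmain
    linarith
  refine ⟨fun h => hodd (by omega) (by omega), fun h => ?_, fun h => hodd (by omega) (by omega)⟩
  obtain ⟨q, hq⟩ : (2 : ℤ) ∣ j + k := by omega
  refine key q (k + l) (by omega) ⟨2, by rw [hq, mul_comm]⟩ ?_ (fun _ hp => hp) (by omega)
  rw [hq] at hmain
  linarith
end

section
/- Let a, b, c, d be integers satisfying (3a - b + 3c - d)^2 = 12ac + 4bd. Then there exists an integer m such that a*b + b*c + c*a = 3*m^2; consequently (a + b)(a + c) = a^2 + 3m^2. -/
/-! The hypothesis is a quadratic in `d`, and completing the square turns it into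
`(d - 3a - 3c - b)² = 12 (ab + bc + ca)`. Hence `d - 3a - 3c - b` is divisible by both `2` and `3`,
so it equals `6m` for some integer `m`, and dividing by `12` gives `ab + bc + ca = 3m²`. -/

theorem triangular_three_square (a b c d : ℤ)
    (hquad : (3 * a - b + 3 * c - d) ^ 2 = 12 * a * c + 4 * b * d) :
    ∃ m : ℤ, a * b + b * c + c * a = 3 * m ^ 2 ∧
      (a + b) * (a + c) = a ^ 2 + 3 * m ^ 2 := by
  have hk : (d - 3 * a - 3 * c - b) ^ 2 = 12 * (a * b + b * c + c * a) := by
    linear_combination hquad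
  have h2 : (2 : ℤ) ∣ d - 3 * a - 3 * c - b :=
    Int.prime_two.dvd_of_dvd_pow (n := 2) ⟨6 * (a * b + b * c + c * a), by rw [hk]; ring⟩
  have h3 : (3 : ℤ) ∣ d - 3 * a - 3 * c - b :=
    Int.prime_three.dvd_of_dvd_pow (n := 2) ⟨4 * (a * b + b * c + c * a), by rw [hk]; ring⟩
  obtain ⟨m, hm⟩ : (6 : ℤ) ∣ d - 3 * a - 3 * c - b := by omega
  rw [hm] at hk
  have hQ : a * b + b * c + c * a = 3 * m ^ 2 := by linarith
  exact ⟨m, hQ, by linear_combination hQ⟩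
end

section
/- Let a, b, c, d be integers satisfying (3a - b + 3c - d)^2 = 12ac + 4bd, and suppose a, b, c, d are all odd. Then a ≡ b (mod 4), a ≡ c (mod 4), and a ≡ d (mod 4); that is, the sum of any two of the four curvatures joined by a tangency is congruent to 2 modulo 4. -/
/-!
Put `a = s + u`, `c = s - u`, `b = t + v`, `d = t - v`; these are integers because all four
curvatures are odd. The quadratic relation becomes `6 * s * (s - t) + 3 * u ^ 2 + v ^ 2 = 0`,
with `s + u` and `t + v` odd. Parity gives `u ≡ v (mod 2)`. If both were odd, then `s` and `t`
would be even, so the relation would read `4 ≡ 0 (mod 8)`. Hence `u` and `v` are even, which gives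
`a ≡ c` and `b ≡ d (mod 4)`, and `s`, `t` are odd. Writing `u = 2 * p`, `v = 2 * q`,
`s - t = 2 * w`, the relation becomes `3 * s * w + 3 * p ^ 2 + q ^ 2 = 0`, so `w + p + q` is even
and `a - b = 2 * (w + p - q)` is divisible by `4`.
-/

/-- For integers a, b, c, d with (3a - b + 3c - d)^2 = 12ac + 4bd,
all odd, we have a ≡ b ≡ c ≡ d (mod 4); i.e. the sum of any two curvatures
joined by a tangency is ≡ 2 (mod 4). -/
theorem triangular_all_odd_congruent (a b c d : ℤ)
    (hquad : (3 * a - b + 3 * c - d) ^ 2 = 12 * a * c + 4 * b * d)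
    (ha : Odd a) (hb : Odd b) (hc : Odd c) (hd : Odd d) :
    a % 4 = b % 4 ∧ a % 4 = c % 4 ∧ a % 4 = d % 4 ∧
    (a + b) % 4 = 2 ∧ (a + c) % 4 = 2 ∧ (a + d) % 4 = 2 ∧
    (c + b) % 4 = 2 ∧ (c + d) % 4 = 2 := by
  obtain ⟨s, hs⟩ := ha.add_odd hc
  obtain ⟨t, ht⟩ := hb.add_odd hd
  obtain ⟨u, rfl⟩ : ∃ u, a = s + u := ⟨a - s, by ring⟩
  obtain ⟨v, rfl⟩ : ∃ v, b = t + v := ⟨b - t, by ring⟩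
  obtain rfl : c = s - u := by linarith
  obtain rfl : d = t - v := by linarith
  have key : 6 * (s * (s - t)) + 3 * u ^ 2 + v ^ 2 = 0 := by linarith
  rcases Int.even_or_odd' u with ⟨p, rfl | rfl⟩
  · rcases Int.even_or_odd' v with ⟨q, rfl | rfl⟩
    · obtain ⟨w, hw⟩ : ∃ w, s - t = 2 * w := ⟨(s - t) / 2, by grind⟩
      have key' : 3 * (s * w) + 3 * p ^ 2 + q ^ 2 = 0 := by
        rw [hw] at key
        linarith
      have hs_odd : Odd s := by grind
      have hpar : Even (w + p + q) := by
        have h : Even (3 * (s * w) + 3 * p ^ 2 + q ^ 2) := by simp [key']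
        have h3 : ¬ Even (3 : ℤ) := by decide
        simpa [Int.even_add, Int.even_mul, Int.even_pow, h3,
          Int.not_even_iff_odd.2 hs_odd] using h
      obtain ⟨r, hr⟩ := hpar
      obtain ⟨j, hj⟩ := hs_odd
      omega
    · ring_nf at key
      omega
  · rcases Int.even_or_odd' v with ⟨q, rfl | rfl⟩
    · ring_nf at key
      omega
    · obtain ⟨m, rfl⟩ : ∃ m, s = 2 * m := ⟨s / 2, by grind⟩
      obtain ⟨n, rfl⟩ : ∃ n, t = 2 * n := ⟨t / 2, by grind⟩
      -- `s * (s - t)` is divisible by `4`, while an odd square is `1` modulo `8`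
      obtain ⟨i, hi⟩ := Int.even_mul_succ_self p
      obtain ⟨j, hj⟩ := Int.even_mul_succ_self q
      have h : 24 * (m * (m - n)) + 24 * i + 8 * j + 4 = 0 := by linarith
      omega
end

section
/- Let a, b, c, d be integers satisfying (3a - b + 3c - d)^2 = 12ac + 4bd, and suppose a and b are odd while c is even. Then d is even and a + b ≡ 4 (mod 8). -/
/-!
Everything follows by descending through powers of two. Modulo 2 the relation forces `d` to be
even; write `c = 2x`, `d = 2y`. Dividing by 4 shows that `3a - b + 3c - d = 4u` for some `u`, and
the relation becomes `2u² = 3ax + by`, so `x` and `y` have the same parity, say `y = x + 2k`. Then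
`b = 3a + 4(x - k - u)`, and substituting this into the relation gives `u² ≡ x + k (mod 2)`.
Hence `x - k - u` is even, `b ≡ 3a (mod 8)`, and `a + b ≡ 4a ≡ 4 (mod 8)`.
-/

/-- For integers a, b, c, d with (3a - b + 3c - d)^2 = 12ac + 4bd,
with a, b odd and c even, d is even and a + b ≡ 4 (mod 8). -/
theorem triangular_mixed_parity (a b c d : ℤ)
    (hquad : (3 * a - b + 3 * c - d) ^ 2 = 12 * a * c + 4 * b * d)
    (ha : Odd a) (hb : Odd b) (hc : Even c) :
    Even d ∧ (a + b) % 8 = 4 := by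
  have hS : Even (3 * a - b + 3 * c - d) := by
    have h : Even ((3 * a - b + 3 * c - d) ^ 2) :=
      ⟨6 * a * c + 2 * b * d, by linear_combination hquad⟩
    exact (Int.even_pow.mp h).1
  have hd : Even d := by
    obtain ⟨p, hp⟩ := ha
    obtain ⟨q, hq⟩ := hb
    obtain ⟨x, hx⟩ := hc
    obtain ⟨s, hs⟩ := hS
    exact ⟨3 * p - q + 1 + 3 * x - s, by linarith⟩
  refine ⟨hd, ?_⟩
  obtain ⟨t, ht⟩ := hS
  obtain ⟨x, rfl⟩ := hc
  obtain ⟨y, rfl⟩ := hd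
  rw [ht] at hquad
  have hT : Even t := by
    have h : Even (t ^ 2) := ⟨3 * a * x + b * y, by linarith⟩
    exact (Int.even_pow.mp h).1
  obtain ⟨u, rfl⟩ := hT
  have h2 : 2 * u ^ 2 = 3 * a * x + b * y := by linarith
  have hxy : Even (y - x) := by
    obtain ⟨p, rfl⟩ := ha
    obtain ⟨q, rfl⟩ := hb
    exact ⟨u ^ 2 - 3 * p * x - q * y - 2 * x, by linarith⟩
  obtain ⟨k, hk⟩ := hxy
  obtain rfl : y = x + 2 * k := by linarith
  obtain rfl : b = 3 * a + 4 * (x - k - u) := by linarith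
  have hu : Even (u ^ 2 - 3 * a * (x + k)) :=
    ⟨x ^ 2 + k * x - 2 * k ^ 2 - u * x - 2 * u * k, by linarith⟩
  have hm : Even (x - k - u) := by
    have ha' : ¬ Even a := Int.not_even_iff_odd.mpr ha
    have h3 : ¬ Even (3 : ℤ) := by decide
    simp only [Int.even_sub, Int.even_add, Int.even_mul, Int.even_pow, ha', h3] at hu ⊢
    tauto
  obtain ⟨m, hm⟩ := hm
  obtain ⟨p, rfl⟩ := ha
  omega
end

section
/- Let a, b, c, d be integers satisfying (3a - b + 3c - d)^2 = 12ac + 4bd, with gcd(a, b, c, d) = 1 and a + b > 0. Then a + b is not congruent to 5, 10, or 11 modulo 12. (Here a and b are curvatures of two tangent circles.) -/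
/-!
Solving the quadratic relation for `d`, its discriminant must be a square, which gives an integer
`m` with `a * b + b * c + c * a = 3 * m ^ 2`, that is `(a + b) * (b + c) = b ^ 2 + 3 * m ^ 2`.
An odd prime `p ≡ 2 (mod 3)` is inert for the form `x ^ 2 + 3 * y ^ 2`: it divides a value only
if it divides both `x` and `y` (`inert_dvd`). By primitivity such a prime cannot divide both
`a + b` and `b + c`, so it divides `a + b` to an even power; hence the odd part of `a + b`, being
positive, is not `2` modulo `3` (`not_two_mod_three`, by descent on `p ^ 2`). The residues
`5` and `11` are odd and `2` modulo `3`, while `10` makes `(a + b) / 2` odd and `2` modulo `3`.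
-/

/-- `-3` is not a square modulo an odd prime `p ≡ 2 (mod 3)`, since there is no element of
order `3` in the unit group, whose order is `p - 1`. -/
lemma neg_three_not_square {p : ℕ} [Fact p.Prime] (h3 : p % 3 = 2) (h2 : p ≠ 2) (x : ZMod p) :
    x ^ 2 ≠ -3 := by
  intro hx
  have hp : p.Prime := Fact.out
  have two : (2 : ZMod p) ≠ 0 := by
    intro h
    have h' : ((2 : ℕ) : ZMod p) = 0 := by exact_mod_cast h
    rw [ZMod.natCast_eq_zero_iff] at h'
    exact h2 ((Nat.prime_dvd_prime_iff_eq hp Nat.prime_two).1 h')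
  have three : (3 : ZMod p) ≠ 0 := by
    intro h
    have h' : ((3 : ℕ) : ZMod p) = 0 := by exact_mod_cast h
    rw [ZMod.natCast_eq_zero_iff] at h'
    have := (Nat.prime_dvd_prime_iff_eq hp Nat.prime_three).1 h'
    omega
  -- a primitive cube root of unity
  obtain ⟨w, hw⟩ : ∃ w : ZMod p, 2 * w = x - 1 := ⟨(x - 1) / 2, by field_simp⟩
  have hw2 : w ^ 2 + w + 1 = 0 := by
    have : (2 * 2 : ZMod p) * (w ^ 2 + w + 1) = 0 := by
      linear_combination (2 * w + x + 1) * hw + hx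
    exact (mul_eq_zero.1 this).resolve_left (mul_ne_zero two two)
  have hw3 : w ^ 3 = 1 := by linear_combination (w - 1) * hw2
  have hw0 : w ≠ 0 := by rintro rfl; simp at hw2
  have hfer := ZMod.pow_card_sub_one_eq_one hw0
  have he : p - 1 = 3 * (p / 3) + 1 := by omega
  rw [he, pow_succ, pow_mul, hw3, one_pow, one_mul] at hfer
  rw [hfer] at hw2
  exact three (by linear_combination hw2)

lemma inert_dvd {p : ℕ} (hp : p.Prime) (h3 : p % 3 = 2) (h2 : p ≠ 2) {x y : ℤ}
    (h : (p : ℤ) ∣ x ^ 2 + 3 * y ^ 2) : (p : ℤ) ∣ x ∧ (p : ℤ) ∣ y := by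
  have : Fact p.Prime := ⟨hp⟩
  simp only [← ZMod.intCast_zmod_eq_zero_iff_dvd] at h ⊢
  push_cast at h
  have hy : (y : ZMod p) = 0 := by
    by_contra hy
    refine neg_three_not_square h3 h2 ((x : ZMod p) / y) ?_
    field_simp
    linear_combination h
  refine ⟨?_, hy⟩
  simpa [hy] using h

lemma exists_prime_two_mod_three (u : ℕ) (hu : u % 3 = 2) :
    ∃ p, p.Prime ∧ p % 3 = 2 ∧ p ∣ u := by
  induction u using Nat.strong_induction_on with
  | _ u ih =>
    obtain ⟨q, hq, v, rfl⟩ := Nat.exists_prime_and_dvd (n := u) (by omega)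
    by_cases hq3 : q % 3 = 2
    · exact ⟨q, hq, hq3, dvd_mul_right _ _⟩
    · have hv : v % 3 = 2 := by
        rw [Nat.mul_mod] at hu
        have : q % 3 < 3 := Nat.mod_lt _ (by norm_num)
        have : v % 3 < 3 := Nat.mod_lt _ (by norm_num)
        interval_cases q % 3 <;> omega
      have hv0 : 0 < v := by omega
      obtain ⟨p, hp, hp3, hpv⟩ := ih v (by nlinarith [hq.two_le]) hv
      exact ⟨p, hp, hp3, hpv.mul_left _⟩

/-- If no odd prime `p ≡ 2 (mod 3)` divides both factors of `u * k = x ^ 2 + 3 * y ^ 2`,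
each one divides the odd number `u` to an even power, so `u` is not `2` modulo `3`. -/
lemma not_two_mod_three (u : ℕ) (hodd : u % 2 = 1) (k x y : ℤ)
    (h : (u : ℤ) * k = x ^ 2 + 3 * y ^ 2)
    (hk : ∀ p : ℕ, p.Prime → p % 3 = 2 → p ≠ 2 → p ∣ u → ¬ (p : ℤ) ∣ k) :
    u % 3 ≠ 2 := by
  induction u using Nat.strong_induction_on generalizing x y with
  | _ u ih =>
    intro hu
    obtain ⟨p, hp, hp3, hpu⟩ := exists_prime_two_mod_three u hu
    have hp2 : p ≠ 2 := by rintro rfl; omega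
    have hpk := hk p hp hp3 hp2 hpu
    have hpI : Prime (p : ℤ) := Nat.prime_iff_prime_int.1 hp
    have hp0 : (p : ℤ) ≠ 0 := hpI.ne_zero
    obtain ⟨⟨x', rfl⟩, ⟨y', rfl⟩⟩ := inert_dvd hp hp3 hp2 (x := x) (y := y)
      (h ▸ (Int.natCast_dvd_natCast.2 hpu).mul_right k)
    obtain ⟨v, rfl⟩ := hpu
    push_cast at h
    have h1 : (v : ℤ) * k = p * (x' ^ 2 + 3 * y' ^ 2) :=
      mul_left_cancel₀ hp0 (by linear_combination h)
    have hpv : p ∣ v :=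
      Int.natCast_dvd_natCast.1 ((hpI.dvd_or_dvd (Dvd.intro _ h1.symm)).resolve_right hpk)
    obtain ⟨w, rfl⟩ := hpv
    push_cast at h1
    have hpp : p * p % 3 = 1 := by rw [Nat.mul_mod, hp3]
    have hw3 : w % 3 = 2 := by
      rw [← mul_assoc, Nat.mul_mod, hpp] at hu
      omega
    have hwodd : w % 2 = 1 := by
      rw [← Nat.odd_iff] at hodd ⊢
      exact (Nat.odd_mul.1 (Nat.odd_mul.1 hodd).2).2
    have hw0 : 0 < w := by omega
    refine ih w ?_ hwodd x' y' (mul_left_cancel₀ hp0 (by linear_combination h1)) ?_ hw3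
    · rw [← mul_assoc]
      exact lt_mul_of_one_lt_left hw0 (by nlinarith [hp.two_le])
    · intro q hq hq3 hq2 hqw
      exact hk q hq hq3 hq2 ((hqw.mul_left _).mul_left _)

/-- For integers a, b, c, d with (3a - b + 3c - d)^2 = 12ac + 4bd,
gcd(a,b,c,d) = 1 and a + b > 0, the sum a + b is not ≡ 5, 10 or 11 (mod 12). -/
theorem triangular_tangent_sum_mod_twelve (a b c d : ℤ)
    (hquad : (3 * a - b + 3 * c - d) ^ 2 = 12 * a * c + 4 * b * d)
    (hprim : Int.gcd a (Int.gcd b (Int.gcd c d)) = 1)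
    (hpos : 0 < a + b) :
    (a + b) % 12 ≠ 5 ∧ (a + b) % 12 ≠ 10 ∧ (a + b) % 12 ≠ 11 := by
  -- the discriminant `12 * (a * b + b * c + c * a)` is a square, divisible by `36`
  have he : (d - b - 3 * a - 3 * c) ^ 2 = 12 * (a * b + b * c + c * a) := by
    linear_combination hquad
  obtain ⟨m, hm⟩ : (6 : ℤ) ∣ d - b - 3 * a - 3 * c := by
    have h2 : (2 : ℤ) ∣ d - b - 3 * a - 3 * c :=
      Int.prime_two.dvd_of_dvd_pow (n := 2) (by rw [he]; omega)
    have h3 : (3 : ℤ) ∣ d - b - 3 * a - 3 * c :=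
      Int.prime_three.dvd_of_dvd_pow (n := 2) (by rw [he]; omega)
    omega
  have hS : (a + b) * (b + c) = b ^ 2 + 3 * m ^ 2 := by
    rw [hm] at he
    linarith
  have hcop : ∀ p : ℕ, p.Prime → p % 3 = 2 → p ≠ 2 → (p : ℤ) ∣ a + b → ¬ (p : ℤ) ∣ b + c := by
    intro p hp hp3 hp2 hab hbc
    obtain ⟨hb, hm'⟩ := inert_dvd hp hp3 hp2 (x := b) (y := m) (hS ▸ hab.mul_right _)
    have ha : (p : ℤ) ∣ a := (dvd_add_left hb).1 hab
    have hc : (p : ℤ) ∣ c := (dvd_add_right hb).1 hbc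
    have hd : (p : ℤ) ∣ d := by
      have : d = 6 * m + b + 3 * a + 3 * c := by linarith
      rw [this]
      exact (((hm'.mul_left _).add hb).add (ha.mul_left _)).add (hc.mul_left _)
    have := Int.dvd_coe_gcd ha (Int.dvd_coe_gcd hb (Int.dvd_coe_gcd hc hd))
    rw [hprim] at this
    exact hp.one_lt.ne' (Nat.dvd_one.1 (Int.natCast_dvd_natCast.1 this))
  have hodd : (a + b) % 2 = 1 → (a + b) % 3 ≠ 2 := by
    intro h2 h3
    obtain ⟨u, hu⟩ := Int.eq_ofNat_of_zero_le hpos.le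
    refine not_two_mod_three u (by omega) (b + c) b m (hu ▸ hS) ?_ (by omega)
    intro p hp hp3 hp2 hpu
    exact hcop p hp hp3 hp2 (hu ▸ Int.natCast_dvd_natCast.2 hpu)
  refine ⟨fun h => hodd (by omega) (by omega), fun h => ?_, fun h => hodd (by omega) (by omega)⟩
  obtain ⟨u, hu⟩ : ∃ u : ℕ, a + b = 2 * (u : ℤ) := ⟨((a + b) / 2).toNat, by omega⟩
  -- the factor `2` of `a + b` is moved to the cofactor
  refine not_two_mod_three u (by omega) (2 * (b + c)) b m ?_ ?_ (by omega)
  · rw [← hS, hu]; ring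
  · intro p hp hp3 hp2 hpu hpk
    rcases (Nat.prime_iff_prime_int.1 hp).dvd_or_dvd hpk with h' | h'
    · exact hp2 ((Nat.prime_dvd_prime_iff_eq hp Nat.prime_two).1 (by exact_mod_cast h'))
    · exact hcop p hp hp3 hp2 (hu ▸ (Int.natCast_dvd_natCast.2 hpu).mul_left 2) h'
end

section
/- Let n be an odd positive integer and let A, B, C be integers such that n divides B^2 - 4AC. Suppose ρ₁ = A*x₁^2 + B*x₁*y₁ + C*y₁^2 and ρ₂ = A*x₂^2 + B*x₂*y₂ + C*y₂^2 for some integers x₁, y₁, x₂, y₂, and suppose ρ₁ and ρ₂ are both coprime to n. Then the Jacobi symbols satisfy (ρ₁ / n) = (ρ₂ / n). -/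
/-! Composing the form with itself gives `4 ρ₁ ρ₂ = S² - D T²`, where `D = B² - 4AC`,
`S = 2 A x₁ x₂ + B (x₁ y₂ + x₂ y₁) + 2 C y₁ y₂` and `T = x₁ y₂ - x₂ y₁`. Since `n ∣ D`, the product
`4 ρ₁ ρ₂` is a square modulo `n`, so `(ρ₁ / n) (ρ₂ / n) = (S / n)² ≥ 0`; as both symbols are `±1`,
they agree. -/

/-- If n is an odd positive integer dividing the discriminant
B^2 - 4AC of a binary quadratic form, then the Jacobi symbol (ρ / n) is the
same for all integers ρ represented by the form and coprime to n. -/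
theorem jacobiSym_constant_on_form (n : ℕ) (hn : Odd n) (hpos : 0 < n)
    (A B C : ℤ) (hdvd : (n : ℤ) ∣ B ^ 2 - 4 * A * C)
    (ρ₁ ρ₂ x₁ y₁ x₂ y₂ : ℤ)
    (h₁ : ρ₁ = A * x₁ ^ 2 + B * x₁ * y₁ + C * y₁ ^ 2)
    (h₂ : ρ₂ = A * x₂ ^ 2 + B * x₂ * y₂ + C * y₂ ^ 2)
    (hcop₁ : Int.gcd ρ₁ n = 1) (hcop₂ : Int.gcd ρ₂ n = 1) :
    jacobiSym ρ₁ n = jacobiSym ρ₂ n := by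
  obtain ⟨k, hk⟩ := hdvd
  have hmod : (4 * (ρ₁ * ρ₂)) ≡
      (2 * A * x₁ * x₂ + B * (x₁ * y₂ + x₂ * y₁) + 2 * C * y₁ * y₂) ^ 2 [ZMOD n] := by
    rw [Int.modEq_iff_dvd]
    refine ⟨k * (x₁ * y₂ - x₂ * y₁) ^ 2, ?_⟩
    subst h₁ h₂
    linear_combination (x₁ * y₂ - x₂ * y₁) ^ 2 * hk
  have h := jacobiSym.mod_left' hmod
  rw [jacobiSym.mul_left, jacobiSym.mul_left, jacobiSym.at_four hn, jacobiSym.pow_left,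
    one_mul] at h
  have hsq := sq_nonneg (jacobiSym
    (2 * A * x₁ * x₂ + B * (x₁ * y₂ + x₂ * y₁) + 2 * C * y₁ * y₂) n)
  rw [← h] at hsq
  rcases jacobiSym.eq_one_or_neg_one hcop₁ with e₁ | e₁ <;>
    rcases jacobiSym.eq_one_or_neg_one hcop₂ with e₂ | e₂ <;>
    rw [e₁, e₂] at hsq ⊢ <;> norm_num at hsq
end

section
/- Let A, B, C be integers such that 32 divides B^2 - 4AC. Suppose ρ₁ = A*x₁^2 + B*x₁*y₁ + C*y₁^2 and ρ₂ = A*x₂^2 + B*x₂*y₂ + C*y₂^2 for some integers x₁, y₁, x₂, y₂, and suppose ρ₁ and ρ₂ are both odd. Then ρ₁ is congruent to 1 or 7 modulo 8 if and only if ρ₂ is congruent to 1 or 7 modulo 8 (equivalently, the Kronecker symbols (ρ₁ / 2) and (ρ₂ / 2) coincide). -/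
/-!
The product of two values of a form of discriminant `D` is given by the composition identity
`4 * ρ₁ * ρ₂ = U ^ 2 - D * V ^ 2`, where `U = Q(v₁ + v₂) - Q(v₁) - Q(v₂)` is the polar form and
`V = x₁ * y₂ - x₂ * y₁`. If `32 ∣ D` then `B`, hence `U`, is even, and dividing by `4` gives
`ρ₁ * ρ₂ ≡ u ^ 2 (mod 8)` with `U = 2 * u`. When `ρ₁` and `ρ₂` are odd, so is `u`, and therefore
`ρ₁ * ρ₂ ≡ 1 (mod 8)`. As odd residues modulo `8` are their own inverses, even `ρ₁ ≡ ρ₂ (mod 8)`.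
-/

/-- If 32 divides the discriminant B^2 - 4AC of a binary quadratic
form, then for any two odd integers ρ₁, ρ₂ represented by the form,
ρ₁ ≡ 1 or 7 (mod 8) iff ρ₂ ≡ 1 or 7 (mod 8). -/
theorem kronecker_two_constant_on_form (A B C : ℤ)
    (hdvd : (32 : ℤ) ∣ B ^ 2 - 4 * A * C)
    (ρ₁ ρ₂ x₁ y₁ x₂ y₂ : ℤ)
    (h₁ : ρ₁ = A * x₁ ^ 2 + B * x₁ * y₁ + C * y₁ ^ 2)
    (h₂ : ρ₂ = A * x₂ ^ 2 + B * x₂ * y₂ + C * y₂ ^ 2)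
    (hodd₁ : Odd ρ₁) (hodd₂ : Odd ρ₂) :
    ((ρ₁ % 8 = 1 ∨ ρ₁ % 8 = 7) ↔ (ρ₂ % 8 = 1 ∨ ρ₂ % 8 = 7)) := by
  obtain ⟨k, hk⟩ := hdvd
  obtain ⟨b, rfl⟩ : (2 : ℤ) ∣ B :=
    Int.prime_two.dvd_of_dvd_pow (n := 2) ⟨16 * k + 2 * (A * C), by linarith⟩
  obtain ⟨u, w, huw⟩ : ∃ u w : ℤ, ρ₁ * ρ₂ = u ^ 2 - 8 * w := by
    refine ⟨A * x₁ * x₂ + b * (x₁ * y₂ + x₂ * y₁) + C * y₁ * y₂,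
      k * (x₁ * y₂ - x₂ * y₁) ^ 2, ?_⟩
    have hk' : b ^ 2 - A * C = 8 * k := by linarith
    rw [h₁, h₂]
    linear_combination (-(x₁ * y₂ - x₂ * y₁) ^ 2) * hk'
  have hu : Odd u := by
    have h : Odd (u ^ 2) := by
      have := (hodd₁.mul hodd₂).add_even (⟨4 * w, by ring⟩ : Even (8 * w))
      rwa [huw, sub_add_cancel] at this
    exact (Int.odd_pow' two_ne_zero).mp h
  have hu2 : 8 ∣ u ^ 2 - 1 := Int.eight_dvd_sq_sub_one_of_odd hu
  have hprod : ρ₁ * ρ₂ % 8 = 1 := by omega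
  have ho₁ := Int.odd_iff.mp hodd₁
  have ho₂ := Int.odd_iff.mp hodd₂
  rw [Int.mul_emod] at hprod
  have c₁ : ρ₁ % 8 = 1 ∨ ρ₁ % 8 = 3 ∨ ρ₁ % 8 = 5 ∨ ρ₁ % 8 = 7 := by omega
  rcases c₁ with h | h | h | h <;> rw [h] at hprod ⊢ <;> omega
end

section
/- Let (a, b, c, d, e, f) be an integral octahedral sextuple with a odd and a ≠ 0. Define Q_α(x, y) = (a+c)x^2 + (-2a-2b-c+d)xy + 2(a+b)y^2 and Q_β'(x, y) = 2(a+c)x^2 + (-2a-2b-c+d)xy + (a+b)y^2. Suppose ρ₁ = Q_α(x₁, y₁) and ρ₂ = Q_β'(x₂, y₂) for some integers x₁, y₁, x₂, y₂, with ρ₁ and ρ₂ both coprime to a. Then the Jacobi symbols over |a| satisfy (ρ₁ / |a|) = (2 / |a|) · (ρ₂ / |a|); in particular, if a ≡ 1 or 7 (mod 8) then (ρ₁ / |a|) = (ρ₂ / |a|), and if a ≡ 3 or 5 (mod 8) then (ρ₁ / |a|) = -(ρ₂ / |a|). -/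
/-!
Write `P` for the polarisation of `Q_α` at the pair of vectors `(x₁, y₁)`, `(2 x₂, y₂)`. Since
`2 Q_β'(x, y) = Q_α(2 x, y)`, the numbers `ρ₁` and `2 ρ₂` are both values of `Q_α`. For any binary
quadratic form `Q` of discriminant `D`,
`4 Q(v) Q(w) = P(v, w)² - D det(v, w)²`, and here `D = -8 a²`, so `4 ρ₁ · 2 ρ₂` is congruent to the
square `P²` modulo `a`. It is also coprime to `|a|`, hence its Jacobi symbol over `|a|` is `1`.
By multiplicativity `(ρ₁ / |a|) (2 / |a|) (ρ₂ / |a|) = 1` with every factor `±1`. The statements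
modulo `8` follow from the supplementary law for `(2 / |a|)`.
-/

/-- If four times an integer `m` coprime to the odd number `n` is a square modulo `n`, then the
Jacobi symbol of `m` over `n` is `1`. -/
theorem jacobiSym_eq_one_of_four_mul_modEq_sq {n : ℕ} (hn : Odd n) {m P : ℤ}
    (hm : Int.gcd m n = 1) (h : 4 * m ≡ P ^ 2 [ZMOD n]) : jacobiSym m n = 1 := by
  have h2 : Int.gcd 2 n = 1 := hn.coprime_two_left
  have h4 : jacobiSym (4 * m) n = jacobiSym m n := by
    rw [show (4 : ℤ) = 2 ^ 2 by norm_num, jacobiSym.mul_left, jacobiSym.sq_one' h2, one_mul]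
  have hP : Int.gcd P n = 1 := by
    have h4m : IsCoprime (4 * m) (n : ℤ) := by
      rw [show (4 : ℤ) = 2 ^ 2 by norm_num]
      exact ((Int.isCoprime_iff_gcd_eq_one.2 h2).pow_left).mul_left
        (Int.isCoprime_iff_gcd_eq_one.2 hm)
    obtain ⟨k, hk⟩ := h.dvd
    have hP2 : IsCoprime (P ^ 2) (n : ℤ) := by
      rw [show P ^ 2 = 4 * m + n * k by linarith]
      exact h4m.add_mul_left_left k
    exact Int.isCoprime_iff_gcd_eq_one.1 ((IsCoprime.pow_left_iff (by norm_num)).1 hP2)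
  rw [← h4, jacobiSym.mod_left' h, jacobiSym.sq_one' hP]

/-- The supplementary law for `2`, in terms of the residue modulo `8` of a possibly negative
modulus. -/
theorem jacobiSym_two_natAbs {a : ℤ} (ha : Odd a) :
    jacobiSym 2 a.natAbs = if a % 8 = 1 ∨ a % 8 = 7 then 1 else -1 := by
  rw [jacobiSym.at_two ha.natAbs, ZMod.χ₈_nat_eq_if_mod_eight]
  have := Int.odd_iff.1 ha
  split_ifs <;> omega


/-- Let (a,b,c,d,e,f) be an integral octahedral sextuple with a odd
and nonzero. With Q_α(x,y) = (a+c)x² + (-2a-2b-c+d)xy + 2(a+b)y² and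
Q_β'(x,y) = 2(a+c)x² + (-2a-2b-c+d)xy + (a+b)y², if ρ₁ is represented by Q_α
and ρ₂ by Q_β', both coprime to a, then (ρ₁/|a|) = (2/|a|)·(ρ₂/|a|); in
particular the symbols coincide if a ≡ ±1 (mod 8) and are opposite if
a ≡ 3, 5 (mod 8). -/
theorem octahedral_alpha_beta_jacobi (a b c d e f : ℤ)
    (hlin1 : a + f = b + e) (hlin2 : a + f = c + d)
    (hquad : (a + f) ^ 2 - 4 * (a + f) * (a + b + c) + 4 * (a ^ 2 + b ^ 2 + c ^ 2) = 0)
    (ha : Odd a) (ha0 : a ≠ 0)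
    (ρ₁ ρ₂ x₁ y₁ x₂ y₂ : ℤ)
    (h₁ : ρ₁ = (a + c) * x₁ ^ 2 + (-2 * a - 2 * b - c + d) * x₁ * y₁
            + 2 * (a + b) * y₁ ^ 2)
    (h₂ : ρ₂ = 2 * (a + c) * x₂ ^ 2 + (-2 * a - 2 * b - c + d) * x₂ * y₂
            + (a + b) * y₂ ^ 2)
    (hcop₁ : Int.gcd ρ₁ a = 1) (hcop₂ : Int.gcd ρ₂ a = 1) :
    jacobiSym ρ₁ a.natAbs = jacobiSym 2 a.natAbs * jacobiSym ρ₂ a.natAbs ∧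
    ((a % 8 = 1 ∨ a % 8 = 7) → jacobiSym ρ₁ a.natAbs = jacobiSym ρ₂ a.natAbs) ∧
    ((a % 8 = 3 ∨ a % 8 = 5) → jacobiSym ρ₁ a.natAbs = -jacobiSym ρ₂ a.natAbs) := by
  have hdisc : (-2 * a - 2 * b - c + d) ^ 2 - 8 * (a + c) * (a + b) = -8 * a ^ 2 := by
    rw [show d = a + f - c by linarith]
    linear_combination hquad
  have hn : Odd a.natAbs := ha.natAbs
  have hgcd (m : ℤ) : Int.gcd m (a.natAbs : ℤ) = Int.gcd m a := by
    rw [Int.gcd_eq_natAbs, Int.gcd_eq_natAbs, Int.natAbs_natCast]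
  have c₂ : Int.gcd 2 (a.natAbs : ℤ) = 1 := hn.coprime_two_left
  have c₁ : Int.gcd ρ₁ (a.natAbs : ℤ) = 1 := (hgcd ρ₁).trans hcop₁
  have c₃ : Int.gcd ρ₂ (a.natAbs : ℤ) = 1 := (hgcd ρ₂).trans hcop₂
  have hprod : jacobiSym (ρ₁ * (2 * ρ₂)) a.natAbs = 1 := by
    -- `P` is the polarisation of `Q_α` at `(x₁, y₁)` and `(2 x₂, y₂)`.
    refine jacobiSym_eq_one_of_four_mul_modEq_sq (P := 2 * (a + c) * x₁ * (2 * x₂)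
      + (-2 * a - 2 * b - c + d) * (x₁ * y₂ + 2 * x₂ * y₁) + 4 * (a + b) * y₁ * y₂) hn ?_ ?_
    · rw [← Int.isCoprime_iff_gcd_eq_one] at *
      exact c₁.mul_left (c₂.mul_left c₃)
    · rw [Int.modEq_iff_dvd, Int.natAbs_dvd]
      refine ⟨-8 * a * (x₁ * y₂ - 2 * x₂ * y₁) ^ 2, ?_⟩
      rw [h₁, h₂]
      linear_combination (x₁ * y₂ - 2 * x₂ * y₁) ^ 2 * hdisc
  rw [jacobiSym.mul_left, jacobiSym.mul_left] at hprod
  have main : jacobiSym ρ₁ a.natAbs = jacobiSym 2 a.natAbs * jacobiSym ρ₂ a.natAbs := by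
    rcases jacobiSym.eq_one_or_neg_one c₁ with h | h <;> rw [h] at hprod ⊢ <;> linarith
  refine ⟨main, fun h => ?_, fun h => ?_⟩
  · rw [main, jacobiSym_two_natAbs ha, if_pos h, one_mul]
  · rw [main, jacobiSym_two_natAbs ha, if_neg (by omega), neg_one_mul]
end
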